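/- If B ⊂ ℍ has horizontal super-linear growth, then H_B(x) = 0 for every x ∈ B. -/

import Mathlib

open Filter
open scoped ENNReal

namespace SHM

/-- The upper half planar lattice `ℍ = {(x₁,x₂) ∈ ℤ² : x₂ ≥ 0}` (including the x-axis). -/
def upperH : Set (ℤ × ℤ) := {p | 0 ≤ p.2}

/-- The horizontal line `L_n = {(x,n) : x ∈ ℤ}` of height `n`. -/
def lineH (n : ℤ) : Set (ℤ × ℤ) := {p | p.2 = n}

/-- The four unit steps of the planar simple random walk. -/
def dirs : Finset (ℤ × ℤ) := {(1,0), (-1,0), (0,1), (0,-1)}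

/-- The position after `m` steps of the walk started at `z` whose first `n`
increments are given by `σ`. -/
def pos (z : ℤ × ℤ) {n : ℕ} (σ : Fin n → ℤ × ℤ) (m : ℕ) : ℤ × ℤ :=
  z + ∑ i ∈ Finset.univ.filter (fun i : Fin n => (i : ℕ) < m), σ i

/-- The probability that the first `n` increments of the simple random walk
(each uniform on the four unit vectors) satisfy the predicate `E`. -/
noncomputable def stepProb (n : ℕ) (E : (Fin n → ℤ × ℤ) → Prop) : ℝ :=
  (Nat.card {σ : Fin n → ↥dirs // E fun i => ((σ i : ℤ × ℤ))} : ℝ) / 4 ^ n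

/-- `P_z(S_{τ̄_A} = x)` : the walk started at `z` hits `A` (in finite time) for the
first time precisely at the point `x`.  Here `τ̄_A = min {m ≥ 0 : S_m ∈ A}`. -/
noncomputable def hitProb (z : ℤ × ℤ) (A : Set (ℤ × ℤ)) (x : ℤ × ℤ) : ℝ :=
  ∑' n : ℕ, stepProb n fun σ =>
    pos z σ n = x ∧ x ∈ A ∧ ∀ m < n, pos z σ m ∉ A

/-- `P_z(τ̄_A < τ̄_B)` : the walk started at `z` hits `A` strictly before hitting `B`. -/
noncomputable def hitBeforeProb (z : ℤ × ℤ) (A B : Set (ℤ × ℤ)) : ℝ :=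
  ∑' n : ℕ, stepProb n fun σ =>
    pos z σ n ∈ A ∧ pos z σ n ∉ B ∧ ∀ m < n, pos z σ m ∉ A ∧ pos z σ m ∉ B

/-- The stationary harmonic measure `H_{B,N}(x) = Σ_{z ∈ L_N \ B} P_z(S_{τ̄_{B ∪ L₀}} = x)`. -/
noncomputable def harm (B : Set (ℤ × ℤ)) (N : ℕ) (x : ℤ × ℤ) : ℝ :=
  ∑' z : ↥(lineH (N : ℤ) \ B), hitProb (z : ℤ × ℤ) (B ∪ lineH 0) x

/-- `h_{x₁} = sup {x₂ ≥ 0 : {x₁} × [1, x₂] ⊂ B}`, the height of the full column of `B`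
above `x₁` (valued in `ℝ≥0∞` so that an infinite column has height `∞`). -/
noncomputable def colHeight (B : Set (ℤ × ℤ)) (x₁ : ℤ) : ℝ≥0∞ :=
  ⨆ (x₂ : ℕ) (_ : ∀ j : ℤ, 1 ≤ j → j ≤ (x₂ : ℤ) → (x₁, j) ∈ B), (x₂ : ℝ≥0∞)

/-- `B` has horizontal super-linear growth if there are constants `c ∈ (0,∞)` and `M < ∞`
such that `h_{x₁} ≥ c|x₁|` for all `|x₁| ≥ M`. -/
def HorizontalSuperLinear (B : Set (ℤ × ℤ)) : Prop :=
  ∃ c : ℝ, 0 < c ∧ ∃ M : ℝ, ∀ x₁ : ℤ, M ≤ |(x₁ : ℝ)| →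
    ENNReal.ofReal (c * |(x₁ : ℝ)|) ≤ colHeight B x₁

/-- Real-valued first-hit-at-time-`n` probability. -/
noncomputable def fp (A : Set (ℤ × ℤ)) (x : ℤ × ℤ) (n : ℕ) (z : ℤ × ℤ) : ℝ :=
  stepProb n fun σ => pos z σ n = x ∧ x ∈ A ∧ ∀ m < n, pos z σ m ∉ A

lemma pos_zero (z : ℤ × ℤ) {n : ℕ} (σ : Fin n → ℤ × ℤ) : pos z σ 0 = z := by
  simp [pos]

lemma pos_cons (z d : ℤ × ℤ) {n : ℕ} (σ : Fin n → ℤ × ℤ) (m : ℕ) :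
    pos z (Fin.cons d σ : Fin (n+1) → ℤ × ℤ) (m+1) = pos (z + d) σ m := by
  simp only [pos, Finset.sum_filter, Fin.sum_univ_succ]
  simp [add_assoc]

lemma stepProb_succ (n : ℕ) (E : (Fin (n+1) → ℤ × ℤ) → Prop) :
    stepProb (n+1) E = (1/4) * ∑ d ∈ dirs, stepProb n (fun σ => E (Fin.cons d σ)) := by
  classical
  have key : Nat.card {σ : Fin (n+1) → ↥dirs // E fun i => ((σ i : ℤ × ℤ))}
      = ∑ d : ↥dirs, Nat.card {σ : Fin n → ↥dirs //
          E (Fin.cons (d : ℤ × ℤ) fun i => ((σ i : ℤ × ℤ)))} := by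
    rw [← Nat.card_sigma]
    refine Nat.card_congr ?_
    refine Equiv.trans ((Fin.consEquiv (fun _ : Fin (n+1) => ↥dirs)).symm.subtypeEquiv
      (q := fun p : ↥dirs × (Fin n → ↥dirs) =>
        E (Fin.cons (p.1 : ℤ × ℤ) fun i => ((p.2 i : ℤ × ℤ)))) ?_) ?_
    · intro σ
      have : (fun i => ((σ i : ℤ × ℤ))) = (Fin.cons (((Fin.consEquiv (fun _ : Fin (n+1) => ↥dirs)).symm σ).1 : ℤ × ℤ) fun i => ((((Fin.consEquiv (fun _ : Fin (n+1) => ↥dirs)).symm σ).2 i : ℤ × ℤ)) : Fin (n+1) → ℤ × ℤ) := by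
        funext i
        refine Fin.cases ?_ (fun j => ?_) i
        · simp [Fin.consEquiv]
        · simp [Fin.consEquiv, Fin.tail]
      rw [← this]
    · exact
        { toFun := fun p => ⟨p.1.1, ⟨p.1.2, p.2⟩⟩
          invFun := fun p => ⟨(p.1, p.2.1), p.2.2⟩
          left_inv := fun p => rfl
          right_inv := fun p => rfl }
  unfold stepProb
  rw [key, ← Finset.sum_coe_sort dirs]
  push_cast
  rw [← Finset.sum_div, pow_succ]
  ring

lemma fp_nonneg (A : Set (ℤ × ℤ)) (x : ℤ × ℤ) (n : ℕ) (z : ℤ × ℤ) : 0 ≤ fp A x n z := by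
  unfold fp stepProb; positivity

lemma stepProb_false (n : ℕ) (E : (Fin n → ℤ × ℤ) → Prop) (h : ∀ σ, ¬ E σ) :
    stepProb n E = 0 := by
  unfold stepProb
  have : IsEmpty {σ : Fin n → ↥dirs // E fun i => ((σ i : ℤ × ℤ))} := ⟨fun s => h _ s.2⟩
  simp

lemma fp_succ_mem (A : Set (ℤ × ℤ)) (x : ℤ × ℤ) (n : ℕ) (z : ℤ × ℤ) (hz : z ∈ A) :
    fp A x (n+1) z = 0 := by
  apply stepProb_false
  rintro σ ⟨-, -, h⟩
  have := h 0 (by omega)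
  rw [pos_zero] at this
  exact this hz

lemma fp_succ (A : Set (ℤ × ℤ)) (x : ℤ × ℤ) (n : ℕ) (z : ℤ × ℤ) (hz : z ∉ A) :
    fp A x (n+1) z = (1/4) * ∑ d ∈ dirs, fp A x n (z + d) := by
  unfold fp
  rw [stepProb_succ]
  congr 1
  refine Finset.sum_congr rfl fun d _ => ?_
  congr 1
  funext σ
  rw [pos_cons]
  refine propext (and_congr_right fun _ => and_congr_right fun _ => ?_)
  constructor
  · intro h m hm
    rw [← pos_cons]
    exact h (m+1) (by omega)
  · intro h m hm
    cases m with
    | zero => rwa [pos_zero]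
    | succ k => rw [pos_cons]; exact h k (by omega)

lemma fp_zero_ne (A : Set (ℤ × ℤ)) (x : ℤ × ℤ) (z : ℤ × ℤ) (hz : z ≠ x) :
    fp A x 0 z = 0 := by
  apply stepProb_false
  rintro σ ⟨h, -⟩
  rw [pos_zero] at h
  exact hz h

lemma fp_zero_le (A : Set (ℤ × ℤ)) (x : ℤ × ℤ) (z : ℤ × ℤ) : fp A x 0 z ≤ 1 := by
  unfold fp stepProb
  simp only [pow_zero, div_one]
  exact_mod_cast Finite.card_le_one_iff_subsingleton.2 inferInstance

/-- Extended-nonnegative version. -/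
noncomputable def ep (A : Set (ℤ × ℤ)) (x : ℤ × ℤ) (n : ℕ) (z : ℤ × ℤ) : ℝ≥0∞ :=
  ENNReal.ofReal (fp A x n z)

lemma ep_succ (A : Set (ℤ × ℤ)) (x : ℤ × ℤ) (n : ℕ) (z : ℤ × ℤ) :
    ep A x (n+1) z ≤ 4⁻¹ * ∑ d ∈ dirs, ep A x n (z + d) := by
  by_cases hz : z ∈ A
  · simp [ep, fp_succ_mem A x n z hz]
  · unfold ep
    rw [fp_succ A x n z hz, ENNReal.ofReal_mul (by norm_num),
      ENNReal.ofReal_sum_of_nonneg (fun _ _ => fp_nonneg _ _ _ _)]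
    apply le_of_eq
    congr 1
    rw [one_div, ENNReal.ofReal_inv_of_pos (by norm_num)]
    norm_num

lemma T_succ (A : Set (ℤ × ℤ)) (x : ℤ × ℤ) (n : ℕ) (G : ℤ × ℤ → ℝ≥0∞) :
    ∑' z, G z * ep A x (n+1) z ≤ ∑' w, ep A x n w * (4⁻¹ * ∑ d ∈ dirs, G (w - d)) := by
  calc ∑' z, G z * ep A x (n+1) z
      ≤ ∑' z, ∑ d ∈ dirs, 4⁻¹ * (G z * ep A x n (z + d)) := by
        refine ENNReal.tsum_le_tsum fun z => ?_
        calc _ ≤ G z * (4⁻¹ * ∑ d ∈ dirs, ep A x n (z + d)) := by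
              gcongr; exact ep_succ A x n z
          _ = _ := by
              rw [← Finset.mul_sum, ← Finset.mul_sum]; ring
    _ = ∑ d ∈ dirs, ∑' z, 4⁻¹ * (G z * ep A x n (z + d)) :=
        Summable.tsum_finsetSum fun _ _ => ENNReal.summable
    _ = ∑ d ∈ dirs, ∑' w, 4⁻¹ * (G (w - d) * ep A x n w) := by
        refine Finset.sum_congr rfl fun d _ => ?_
        rw [← Equiv.tsum_eq (Equiv.addRight d) (fun w => 4⁻¹ * (G (w - d) * ep A x n w))]
        simp
    _ = ∑' w, ∑ d ∈ dirs, 4⁻¹ * (G (w - d) * ep A x n w) :=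
        (Summable.tsum_finsetSum fun _ _ => ENNReal.summable).symm
    _ = _ := by
        refine tsum_congr fun w => ?_
        rw [← Finset.mul_sum, ← Finset.sum_mul]; ring

/-- Abstract Lyapunov bound. -/
lemma lyap (A : Set (ℤ × ℤ)) (x : ℤ × ℤ) (G I : ℤ × ℤ → ℝ≥0∞)
    (hI : I x = 0)
    (h : ∀ w, w ∉ A → 4⁻¹ * ∑ d ∈ dirs, G (w - d) + I w ≤ G w) :
    ∑' n, ∑' z, I z * ep A x n z ≤ 4⁻¹ * ∑ d ∈ dirs, G (x - d) := by
  have h0 : ∑' z, I z * ep A x 0 z = 0 := by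
    rw [ENNReal.tsum_eq_zero]
    intro z
    by_cases hz : z = x
    · simp [hz, hI]
    · simp [ep, fp_zero_ne A x z hz]
  have h1 : ∑' z, G z * ep A x 1 z ≤ 4⁻¹ * ∑ d ∈ dirs, G (x - d) := by
    refine (T_succ A x 0 G).trans ?_
    rw [tsum_eq_single x]
    · calc _ ≤ 1 * (4⁻¹ * ∑ d ∈ dirs, G (x - d)) := by
            gcongr
            unfold ep
            rw [ENNReal.ofReal_le_one]
            exact fp_zero_le A x x
        _ = _ := one_mul _
    · intro z hz
      simp [ep, fp_zero_ne A x z hz]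
  have hs : ∀ n, ∑' z, G z * ep A x (n+2) z + ∑' z, I z * ep A x (n+1) z
      ≤ ∑' z, G z * ep A x (n+1) z := by
    intro n
    calc _ ≤ ∑' w, ep A x (n+1) w * (4⁻¹ * ∑ d ∈ dirs, G (w - d))
          + ∑' z, I z * ep A x (n+1) z := by
            exact add_le_add (T_succ A x (n+1) G) le_rfl
      _ = ∑' w, (ep A x (n+1) w * (4⁻¹ * ∑ d ∈ dirs, G (w - d)) + I w * ep A x (n+1) w) :=
          ENNReal.tsum_add.symm
      _ ≤ _ := by
          refine ENNReal.tsum_le_tsum fun w => ?_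
          by_cases hw : w ∈ A
          · simp [ep, fp_succ_mem A x n w hw]
          · calc _ = (4⁻¹ * ∑ d ∈ dirs, G (w - d) + I w) * ep A x (n+1) w := by ring
              _ ≤ _ := by gcongr; exact h w hw
  have hsum : ∀ k, ∑' z, G z * ep A x (k+1) z
      + ∑ n ∈ Finset.range k, ∑' z, I z * ep A x (n+1) z ≤ ∑' z, G z * ep A x 1 z := by
    intro k
    induction k with
    | zero => simp
    | succ k ih =>
      rw [Finset.sum_range_succ]
      calc _ = (∑' z, G z * ep A x (k+2) z + ∑' z, I z * ep A x (k+1) z)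
            + ∑ n ∈ Finset.range k, ∑' z, I z * ep A x (n+1) z := by ring
        _ ≤ _ := by
          refine le_trans ?_ ih
          gcongr
          exact hs k
  refine le_trans ?_ h1
  rw [tsum_eq_zero_add' ENNReal.summable, h0, zero_add]
  refine ENNReal.summable.tsum_le_of_sum_range_le fun k => ?_
  exact le_trans le_add_self (hsum k)

lemma harm_le (B : Set (ℤ × ℤ)) (N : ℕ) (x : ℤ × ℤ) (G : ℤ × ℤ → ℝ≥0∞) (hx : x ∈ B)
    (hfin : ∀ z, G z ≠ ∞)
    (h : ∀ w, w ∉ B ∪ lineH 0 →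
      4⁻¹ * ∑ d ∈ dirs, G (w - d) + (lineH (N : ℤ) \ B).indicator 1 w ≤ G w) :
    harm B N x ≤ (4⁻¹ * ∑ d ∈ dirs, G (x - d)).toReal := by
  set A := B ∪ lineH 0 with hA
  have hl := lyap A x G ((lineH (N : ℤ) \ B).indicator 1) (by simp [hx]) h
  have hF : 4⁻¹ * ∑ d ∈ dirs, G (x - d) ≠ ∞ := by
    refine ENNReal.mul_ne_top (by simp) ?_
    exact ENNReal.sum_ne_top.2 fun d _ => hfin _
  rw [ENNReal.tsum_comm] at hl
  have e1 : ∑' z : ↥(lineH (N : ℤ) \ B), ∑' n, ep A x n z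
      ≤ 4⁻¹ * ∑ d ∈ dirs, G (x - d) := by
    refine le_trans (le_of_eq ?_) hl
    rw [tsum_subtype (lineH (N : ℤ) \ B) (fun z => ∑' n, ep A x n z)]
    refine tsum_congr fun z => ?_
    by_cases hz : z ∈ lineH (N : ℤ) \ B
    · rw [Set.indicator_of_mem hz]
      refine tsum_congr fun n => ?_
      rw [Set.indicator_of_mem hz]; simp
    · rw [Set.indicator_of_notMem hz]
      simp [Set.indicator_of_notMem hz]
  have e2 : harm B N x = (∑' z : ↥(lineH (N : ℤ) \ B), ∑' n, ep A x n z).toReal := by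
    rw [ENNReal.tsum_toReal_eq]
    · unfold harm
      refine tsum_congr fun z => ?_
      rw [ENNReal.tsum_toReal_eq (f := fun n => ep A x n z) (fun n => ENNReal.ofReal_ne_top)]
      unfold hitProb
      refine tsum_congr fun n => ?_
      rw [ep, ENNReal.toReal_ofReal (fp_nonneg _ _ _ _)]
      rfl
    · intro z hz
      exact hF (top_le_iff.1 (hz ▸ (ENNReal.le_tsum z).trans e1))
  rw [e2]
  exact ENNReal.toReal_mono hF e1

/-- Logarithmic supersolution. -/
noncomputable def uR (a Y : ℝ) : ℝ := Y * Real.log Y - 2 * a^2 / Y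

lemma ylogy (Y : ℝ) (hY : 2 ≤ Y) :
    (Y+1) * Real.log (Y+1) + (Y-1) * Real.log (Y-1) ≤ 2 * (Y * Real.log Y) + 4 / Y := by
  have h1 : Real.log (Y+1) ≤ Real.log Y + 1 / Y := by
    have := Real.log_le_sub_one_of_pos (show 0 < (Y+1)/Y by positivity)
    rw [Real.log_div (by linarith) (by linarith)] at this
    have e : (Y+1)/Y - 1 = 1 / Y := by field_simp; ring
    linarith
  have h2 : Real.log (Y-1) ≤ Real.log Y - 1 / Y := by
    have := Real.log_le_sub_one_of_pos (show 0 < (Y-1)/Y by apply div_pos <;> linarith)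
    rw [Real.log_div (by linarith) (by linarith)] at this
    have e : (Y-1)/Y - 1 = - (1 / Y) := by field_simp; ring
    linarith
  have h3 := mul_le_mul_of_nonneg_left h1 (show 0 ≤ Y+1 by linarith)
  have h4 := mul_le_mul_of_nonneg_left h2 (show 0 ≤ Y-1 by linarith)
  have e : (Y+1) * (Real.log Y + 1 / Y) + (Y-1) * (Real.log Y - 1 / Y)
      = 2 * (Y * Real.log Y) + 2 / Y := by field_simp; ring
  have : 2 / Y ≤ 4 / Y := by gcongr; norm_num
  linarith

lemma inv_convex (Y : ℝ) (hY : 2 ≤ Y) : 2 / Y ≤ 1 / (Y+1) + 1 / (Y-1) := by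
  have : 0 < Y - 1 := by linarith
  have : 0 < Y := by linarith
  rw [div_add_div _ _ (by positivity) (by positivity), div_le_div_iff₀ (by positivity) (by positivity)]
  nlinarith

lemma uR_super (a Y : ℝ) (hY : 2 ≤ Y) :
    uR (a-1) Y + uR (a+1) Y + uR a (Y-1) + uR a (Y+1) ≤ 4 * uR a Y := by
  unfold uR
  have h1 := ylogy Y hY
  have h2 := mul_le_mul_of_nonneg_left (inv_convex Y hY) (show 0 ≤ 2 * a^2 by positivity)
  have e1 : 2 * (a-1)^2 / Y + 2 * (a+1)^2 / Y = 4 * a^2 / Y + 4 / Y := by ring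
  have e2 : 2 * a^2 * (1/(Y+1) + 1/(Y-1)) = 2 * a^2/(Y+1) + 2*a^2/(Y-1) := by ring
  have e3 : 2 * a^2 * (2 / Y) = 4 * a^2 / Y := by ring
  have e4 : 4 * (2 * a^2 / Y) = 8 * a^2 / Y := by ring
  have e5 : 8 * a^2 / Y = 4 * a^2 / Y + 4 * a^2 / Y := by ring
  rw [mul_sub]
  linarith

lemma uR_lower (c a Y : ℝ) (hc : 0 < c) (hY : Real.exp (4 / c^2) ≤ Y) (h : c * |a| ≤ Y) :
    Y * Real.log Y / 2 ≤ uR a Y := by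
  have hY0 : 0 < Y := (Real.exp_pos _).trans_le hY
  have hl : 4 / c^2 ≤ Real.log Y := by rwa [Real.le_log_iff_exp_le hY0]
  have h2 : c^2 * a^2 ≤ Y^2 := by
    have := pow_le_pow_left₀ (by positivity) h 2
    rwa [mul_pow, sq_abs] at this
  have h3 : 2 * a^2 / Y ≤ Y * (4 / c^2) / 2 := by
    rw [div_le_iff₀ hY0]
    have : Y * (4 / c^2) / 2 * Y = 2 * (Y^2 / c^2) := by ring
    rw [this]
    have : a^2 ≤ Y^2 / c^2 := by rw [le_div_iff₀ (by positivity)]; linarith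
    linarith
  have h4 := mul_le_mul_of_nonneg_left hl hY0.le
  unfold uR
  linarith

lemma growth_cone (B : Set (ℤ × ℤ)) (c M : ℝ) (hc : 0 < c)
    (h : ∀ x₁ : ℤ, M ≤ |(x₁ : ℝ)| → ENNReal.ofReal (c * |(x₁ : ℝ)|) ≤ colHeight B x₁)
    (a y : ℤ) (hy : 0 < y) (hw : (a, y) ∉ B) : c * |(a:ℝ)| ≤ y + c * |M| := by
  have hy' : (0:ℝ) < y := by exact_mod_cast hy
  by_cases hM : M ≤ |(a:ℝ)|
  · have h1 := h a hM
    have h2 : colHeight B a ≤ ENNReal.ofReal (y:ℝ) := by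
      unfold colHeight
      refine iSup₂_le fun k hk => ?_
      have : (k:ℤ) ≤ y := by
        by_contra hlt
        exact hw (hk y (by omega) (by omega))
      rw [← ENNReal.ofReal_natCast]
      apply ENNReal.ofReal_le_ofReal
      exact_mod_cast this
    have h3 := (ENNReal.ofReal_le_ofReal_iff hy'.le).1 (h1.trans h2)
    have : 0 ≤ c * |M| := by positivity
    linarith
  · push Not at hM
    have : c * |(a:ℝ)| ≤ c * |M| := by
      exact mul_le_mul_of_nonneg_left (hM.le.trans (le_abs_self M)) hc.le
    linarith

lemma sum_dirs {α : Type*} [AddCommMonoid α] (f : ℤ × ℤ → α) (a y : ℤ) :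
    ∑ d ∈ dirs, f ((a,y) - d) = f (a-1,y) + (f (a+1,y) + (f (a,y-1) + f (a,y+1))) := by
  unfold dirs
  rw [Finset.sum_insert (by decide), Finset.sum_insert (by decide), Finset.sum_insert (by decide),
    Finset.sum_singleton]
  simp

/-- The capped supersolution. -/
noncomputable def gR (R l : ℝ) (N : ℕ) (p : ℤ × ℤ) : ℝ :=
  min (l * uR p.1 (p.2 + R)) (4 * min (p.2 : ℝ) N)

open Classical in
/-- The supersolution, killed outside the domain. -/
noncomputable def GE (B : Set (ℤ × ℤ)) (R l : ℝ) (N : ℕ) (p : ℤ × ℤ) : ℝ≥0∞ :=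
  if p ∉ B ∧ 0 < p.2 then ENNReal.ofReal (gR R l N p) else 0

lemma GE_le (B : Set (ℤ × ℤ)) (R l : ℝ) (N : ℕ) (p : ℤ × ℤ) :
    GE B R l N p ≤ ENNReal.ofReal (gR R l N p) := by
  unfold GE; split_ifs <;> simp

lemma min_super (N : ℕ) (y : ℤ) :
    min ((y-1 : ℤ):ℝ) N + min ((y+1 : ℤ):ℝ) N + (if y = N then 1 else 0) ≤ 2 * min (y:ℝ) N := by
  have : min (y-1) (N:ℤ) + min (y+1) (N:ℤ) + (if y = N then 1 else 0) ≤ 2 * min y (N:ℤ) := by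
    split_ifs <;> omega
  exact_mod_cast this

lemma GE_super (B : Set (ℤ × ℤ)) (c M R l : ℝ) (hc : 0 < c)
    (h : ∀ x₁ : ℤ, M ≤ |(x₁ : ℝ)| → ENNReal.ofReal (c * |(x₁ : ℝ)|) ≤ colHeight B x₁)
    (hR : R = Real.exp (4 / c^2) + c * |M| + c + 2) (N : ℕ) (hN : 1 ≤ N)
    (hl : l = 8 / Real.log (N + R)) (w : ℤ × ℤ) (hw : w ∉ B ∪ lineH 0) :
    4⁻¹ * ∑ d ∈ dirs, GE B R l N (w - d) + (lineH (N : ℤ) \ B).indicator 1 w ≤ GE B R l N w := by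
  obtain ⟨a, y⟩ := w
  have hwB : (a, y) ∉ B := fun h => hw (Or.inl h)
  have hy0 : y ≠ 0 := fun h => hw (Or.inr h)
  have hexp : 1 ≤ Real.exp (4 / c^2) := Real.one_le_exp (by positivity)
  have hcM : 0 ≤ c * |M| := by positivity
  have hNR : (1:ℝ) < N + R := by
    have : (0:ℝ) ≤ N := by positivity
    linarith
  have hlpos : 0 < l := by rw [hl]; exact div_pos (by norm_num) (Real.log_pos hNR)
  rcases lt_or_gt_of_ne hy0 with hneg | hpos
  · have hz : ∀ p : ℤ × ℤ, p.2 ≤ 0 → GE B R l N p = 0 := by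
      intro p hp
      unfold GE
      rw [if_neg]
      rintro ⟨-, h2⟩
      omega
    have hi : ((a, y) : ℤ × ℤ) ∉ lineH (N : ℤ) \ B := by
      rintro ⟨h1, -⟩
      simp only [lineH, Set.mem_ofPred_eq] at h1
      omega
    rw [Set.indicator_of_notMem hi, sum_dirs, hz (a-1,y) (by simp; omega),
      hz (a+1,y) (by simp; omega), hz (a,y-1) (by simp; omega), hz (a,y+1) (by simp; omega)]
    simp
  · have hcone := growth_cone B c M hc h a y hpos hwB
    have hy1 : (1:ℝ) ≤ y := by exact_mod_cast hpos
    have hN0 : (0:ℝ) ≤ N := by positivity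
    have hu : ∀ p : ℤ × ℤ, |(p.1:ℝ)| ≤ |(a:ℝ)| + 1 → (y:ℝ) - 1 ≤ p.2 →
        (p.2 + R) * Real.log (p.2 + R) / 2 ≤ uR p.1 (p.2 + R) := by
      intro p h1 h2
      apply uR_lower c _ _ hc
      · linarith
      · have := mul_le_mul_of_nonneg_left h1 hc.le
        linarith
    have hg : ∀ p : ℤ × ℤ, |(p.1:ℝ)| ≤ |(a:ℝ)| + 1 → (y:ℝ) - 1 ≤ p.2 → 0 ≤ gR R l N p := by
      intro p h1 h2
      have h3 := hu p h1 h2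
      have h4 : 0 ≤ (p.2 + R) * Real.log (p.2 + R) :=
        mul_nonneg (by linarith) (Real.log_nonneg (by linarith))
      unfold gR
      apply le_min
      · apply mul_nonneg hlpos.le; linarith
      · apply mul_nonneg (by norm_num)
        apply le_min _ hN0
        linarith
    have ha1 : |((a - 1 : ℤ):ℝ)| ≤ |(a:ℝ)| + 1 := by
      push_cast
      calc _ ≤ |(a:ℝ)| + |1| := abs_sub _ _
        _ = _ := by simp
    have ha2 : |((a + 1 : ℤ):ℝ)| ≤ |(a:ℝ)| + 1 := by
      push_cast
      calc _ ≤ |(a:ℝ)| + |1| := abs_add_le _ _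
        _ = _ := by simp
    have g1 := hg (a-1,y) ha1 (by simp)
    have g2 := hg (a+1,y) ha2 (by simp)
    have g3 := hg (a,y-1) (by simp) (by simp)
    have g4 := hg (a,y+1) (by simp) (by push_cast; linarith)
    have hreal : (1/4) * (gR R l N (a-1,y) + (gR R l N (a+1,y) + (gR R l N (a,y-1)
        + gR R l N (a,y+1)))) + (if y = N then 1 else 0) ≤ gR R l N (a,y) := by
      have hm := min_super N y
      have hA : (1/4) * (gR R l N (a-1,y) + (gR R l N (a+1,y) + (gR R l N (a,y-1)
        + gR R l N (a,y+1)))) + (if y = N then 1 else 0) ≤ 4 * min (y:ℝ) N := by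
        have q1 : gR R l N (a-1,y) ≤ 4 * min (y:ℝ) N := min_le_right _ _
        have q2 : gR R l N (a+1,y) ≤ 4 * min (y:ℝ) N := min_le_right _ _
        have q3 : gR R l N (a,y-1) ≤ 4 * min ((y-1 : ℤ):ℝ) N := min_le_right _ _
        have q4 : gR R l N (a,y+1) ≤ 4 * min ((y+1 : ℤ):ℝ) N := min_le_right _ _
        linarith
      by_cases hyN : y = N
      · refine hA.trans (le_min ?_ le_rfl)
        have := hu (a,y) (by simp) (by simp)
        have hyN' : (y:ℝ) = N := by exact_mod_cast hyN
        simp only at this ⊢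
        have h5 := mul_le_mul_of_nonneg_left this hlpos.le
        refine le_trans ?_ h5
        rw [hl, hyN', min_self]
        have hlog := Real.log_pos hNR
        have : 8 / Real.log (N + R) * ((N + R) * Real.log (N + R) / 2) = 4 * (N + R) := by
          field_simp; ring
        rw [this]
        linarith
      · rw [if_neg hyN] at hA ⊢
        refine le_min ?_ hA
        have q1 : gR R l N (a-1,y) ≤ l * uR ((a-1:ℤ):ℝ) (y+R) := min_le_left _ _
        have q2 : gR R l N (a+1,y) ≤ l * uR ((a+1:ℤ):ℝ) (y+R) := min_le_left _ _
        have q3 : gR R l N (a,y-1) ≤ l * uR a ((y-1:ℤ)+R) := min_le_left _ _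
        have q4 : gR R l N (a,y+1) ≤ l * uR a ((y+1:ℤ)+R) := min_le_left _ _
        have hs := mul_le_mul_of_nonneg_left (uR_super a (y+R) (by linarith)) hlpos.le
        have r3 : (((y-1:ℤ):ℝ)+R) = y + R - 1 := by push_cast; ring
        have r4 : (((y+1:ℤ):ℝ)+R) = y + R + 1 := by push_cast; ring
        rw [r3] at q3
        rw [r4] at q4
        push_cast at q1 q2
        simp only
        linarith
    have hind : (lineH (N : ℤ) \ B).indicator (1 : ℤ × ℤ → ℝ≥0∞) (a,y)
        = ENNReal.ofReal (if y = N then 1 else 0) := by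
      by_cases hyN : y = N
      · rw [Set.indicator_of_mem (show (a,y) ∈ lineH (N:ℤ) \ B from ⟨hyN, hwB⟩), if_pos hyN]; simp
      · rw [Set.indicator_of_notMem (show (a,y) ∉ lineH (N:ℤ) \ B from fun h => hyN h.1), if_neg hyN]; simp
    have hGw : GE B R l N (a,y) = ENNReal.ofReal (gR R l N (a,y)) := if_pos ⟨hwB, hpos⟩
    rw [hGw, hind, sum_dirs]
    refine le_trans ?_ (ENNReal.ofReal_le_ofReal hreal)
    rw [ENNReal.ofReal_add (by positivity) (by split_ifs <;> norm_num),
      ENNReal.ofReal_mul (by norm_num), ENNReal.ofReal_add g1 (by positivity),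
      ENNReal.ofReal_add g2 (by positivity), ENNReal.ofReal_add g3 g4]
    have h4 : ENNReal.ofReal (1/4) = 4⁻¹ := by
      rw [one_div, ENNReal.ofReal_inv_of_pos (by norm_num)]
      norm_num
    rw [h4]
    gcongr <;> exact GE_le _ _ _ _ _

/-- **Theorem 1.** If `B ⊂ ℍ` has horizontal super-linear growth, then `H_B(x) = 0`
for every `x ∈ B`. -/
theorem harm_eq_zero_of_superLinear (B : Set (ℤ × ℤ)) (hB : B ⊆ upperH)
    (hgrowth : HorizontalSuperLinear B) (x : ℤ × ℤ) (hx : x ∈ B) :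
    Tendsto (fun N : ℕ => harm B N x) atTop (nhds 0) := by
  obtain ⟨c, hc, M, h⟩ := hgrowth
  set R : ℝ := Real.exp (4 / c^2) + c * |M| + c + 2 with hR
  have hexp : 1 ≤ Real.exp (4 / c^2) := Real.one_le_exp (by positivity)
  have hcM : 0 ≤ c * |M| := by positivity
  set K : ℝ := ∑ d ∈ dirs, |uR ((x - d).1 : ℝ) ((x - d).2 + R)| with hK
  have hlog : Tendsto (fun N : ℕ => Real.log (N + R)) atTop atTop :=
    Real.tendsto_log_atTop.comp
      (tendsto_atTop_add_const_right _ _ tendsto_natCast_atTop_atTop)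
  have hlim : Tendsto (fun N : ℕ => 8 / Real.log (N + R) * K) atTop (nhds 0) := by
    have := (hlog.const_div_atTop 8).mul_const K
    simpa using this
  refine squeeze_zero' (Eventually.of_forall fun N => ?_) ?_ hlim
  · exact tsum_nonneg fun z => tsum_nonneg fun n => fp_nonneg _ x n z
  · filter_upwards [eventually_ge_atTop 1] with N hN
    have hNR : (1:ℝ) < N + R := by
      have : (0:ℝ) ≤ N := by positivity
      linarith
    set l := 8 / Real.log (N + R) with hl
    have hlpos : 0 < l := div_pos (by norm_num) (Real.log_pos hNR)
    refine (harm_le B N x (GE B R l N) hx ?_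
      (GE_super B c M R l hc h hR N hN hl)).trans ?_
    · intro z
      exact ne_top_of_le_ne_top ENNReal.ofReal_ne_top (GE_le B R l N z)
    · refine ENNReal.toReal_le_of_le_ofReal (by positivity) ?_
      calc 4⁻¹ * ∑ d ∈ dirs, GE B R l N (x - d)
          ≤ 1 * ∑ d ∈ dirs, GE B R l N (x - d) := by
            gcongr
            rw [ENNReal.inv_le_one]; norm_num
        _ ≤ ∑ d ∈ dirs, ENNReal.ofReal (l * |uR ((x - d).1 : ℝ) ((x - d).2 + R)|) := by
            rw [one_mul]
            refine Finset.sum_le_sum fun d _ => (GE_le B R l N _).trans ?_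
            apply ENNReal.ofReal_le_ofReal
            refine (min_le_left _ _).trans ?_
            exact mul_le_mul_of_nonneg_left (le_abs_self _) hlpos.le
        _ = ENNReal.ofReal (l * K) := by
            rw [← ENNReal.ofReal_sum_of_nonneg (fun _ _ => by positivity), ← Finset.mul_sum]

end SHM
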